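/- Let p be an odd prime and e : ℕ → ℕ → ℕ the recursively defined sequence (see context). Then for every fixed n ∈ ℕ there exists B ∈ ℕ such that e d n ≤ B for all d ∈ ℕ. That is, in characteristic p and for fixed cohomological degree n, the dimensions dim Ext^n(k, Δ(2d)) are bounded independently of d. -/

import Mathlib

/-- For an odd prime `p`, the recursively defined dimensions
`e p d m = dim Ext^m(Δ(0), Δ(2d))` over `SL₂` in characteristic `p`:
`e 0 0 = 1`, `e 0 m = 0` for `m ≥ 1`; `e d m = 0` if `d > 0` is not of the form
`kp` or `kp − 1` with `k ≥ 1`; and for `k ≥ 1`: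
`e (kp) m = (if m ≥ 1 then e (kp−1) (m−1) else 0)` and
`e (kp−1) m = (if m ≥ 1 then e ((k−1)p) (m−1) else 0) + e (k−1) m`. -/
def e (p : ℕ) : ℕ → ℕ → ℕ
  | 0, 0 => 1
  | 0, _ + 1 => 0
  | d + 1, m =>
    if h1 : (d + 1) % p = 0 then
      match m with
      | 0 => 0
      | m' + 1 => e p d m'
    else if h2 : (d + 2) % p = 0 then
      (match m with
       | 0 => 0
       | m' + 1 => e p (d + 2 - p) m') + e p ((d + 2) / p - 1) m
    else 0
termination_by d m => d
decreasing_by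
  · omega
  · have hp : 2 ≤ p := by
      by_contra hlt
      push_neg at hlt
      interval_cases p
      · simp at h2
      · omega
    omega
  · have hp : 2 ≤ p := by
      by_contra hlt
      push_neg at hlt
      interval_cases p
      · simp at h2
      · omega
    have h3 : (d + 2) / p ≤ (d + 2) / 2 := Nat.div_le_div_left hp (by omega)
    omega

/-- base-`p` digit sum -/
def digSum (p D : ℕ) : ℕ := (Nat.digits p D).sum

theorem digSum_zero (p : ℕ) : digSum p 0 = 0 := by simp [digSum]

theorem digSum_add {p : ℕ} (hp : 2 ≤ p) (a r : ℕ) (hr : r < p) :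
    digSum p (p * a + r) = r + digSum p a := by
  by_cases h : p * a + r = 0
  · have hr0 : r = 0 := by omega
    have ha : a = 0 := by
      have : p * a = 0 := by omega
      rcases Nat.mul_eq_zero.mp this with h | h <;> omega
    subst hr0 ha
    simp [digSum]
  · unfold digSum
    rw [Nat.digits_def' (by omega) (by omega)]
    have h1 : (p * a + r) % p = r := by
      rw [Nat.mul_add_mod, Nat.mod_eq_of_lt hr]
    have h2 : (p * a + r) / p = a := by
      rw [Nat.mul_add_div (by omega), Nat.div_eq_of_lt hr, Nat.add_zero]
    rw [h1, h2, List.sum_cons]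

theorem digSum_succ {p : ℕ} (hp : 2 ≤ p) (a : ℕ) : digSum p (a + 1) ≤ digSum p a + 1 := by
  induction a using Nat.strong_induction_on with
  | _ a ih =>
    have hd := Nat.div_add_mod a p
    have hr : a % p < p := Nat.mod_lt _ (by omega)
    have ha := digSum_add hp (a / p) (a % p) hr
    rw [hd] at ha
    by_cases h : a % p + 1 < p
    · have := digSum_add hp (a / p) (a % p + 1) h
      rw [← Nat.add_assoc, hd] at this
      omega
    · have h2 : a + 1 = p * (a / p + 1) + 0 := by
        rw [Nat.mul_add]; omega
      have h3 := digSum_add hp (a / p + 1) 0 (by omega)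
      rw [← h2] at h3
      have hlt : a / p < a := Nat.div_lt_self (by
        rcases Nat.eq_zero_or_pos a with h0 | h0
        · subst h0; simp at h; omega
        · exact h0) (by omega)
      have := ih _ hlt
      omega

theorem le_digSum_pred {p : ℕ} (hp : 2 ≤ p) (i : ℕ) : ∀ k, p ^ i ∣ k + 1 → i ≤ digSum p k := by
  induction i with
  | zero => intro k _; omega
  | succ i ih =>
    rintro k ⟨c, hc⟩
    have hk : k + 1 = p * (p ^ i * c) := by rw [hc]; ring
    obtain ⟨b, hb⟩ : ∃ b, p ^ i * c = b + 1 := by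
      refine Nat.exists_eq_succ_of_ne_zero ?_
      intro h; rw [h] at hk; simp at hk
    have h1 := ih b ⟨c, hb.symm⟩
    have h2 := digSum_add hp b (p - 1) (by omega)
    have h3 : k = p * b + (p - 1) := by
      rw [hb, Nat.mul_add] at hk; omega
    rw [← h3] at h2
    omega

theorem e_zero_le (p m : ℕ) : e p 0 m ≤ 1 := by
  cases m <;> simp [e]

theorem e_mul (p : ℕ) (hp : 3 ≤ p) (k m : ℕ) :
    e p (p * (k + 1)) (m + 1) = e p (p * (k + 1) - 1) m := by
  obtain ⟨d, hd⟩ : ∃ d, p * (k + 1) = d + 1 :=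
    Nat.exists_eq_succ_of_ne_zero (by positivity)
  have : (d + 1) % p = 0 := by rw [← hd]; simp
  rw [hd, e]; simp [this]

theorem e_mul_zero (p : ℕ) (hp : 3 ≤ p) (k : ℕ) :
    e p (p * (k + 1)) 0 = 0 := by
  obtain ⟨d, hd⟩ : ∃ d, p * (k + 1) = d + 1 :=
    Nat.exists_eq_succ_of_ne_zero (by positivity)
  have : (d + 1) % p = 0 := by rw [← hd]; simp
  rw [hd, e]; simp [this]

theorem e_pred (p : ℕ) (hp : 3 ≤ p) (k m : ℕ) :
    e p (p * (k + 1) - 1) m =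
      (match m with
       | 0 => 0
       | m' + 1 => e p (p * k) m') + e p k m := by
  have h0 : p * (k + 1) = p * k + p := by ring
  obtain ⟨d, hd⟩ : ∃ d, p * (k + 1) = d + 2 := ⟨p * k + p - 2, by omega⟩
  have h1 : (d + 2) % p = 0 := by rw [← hd]; simp
  have h2 : (d + 1) % p ≠ 0 := by
    intro h
    have a := Nat.dvd_of_mod_eq_zero h
    have b := Nat.dvd_of_mod_eq_zero h1
    have c : p ∣ 1 := (Nat.dvd_add_right a).mp b
    have := Nat.le_of_dvd one_pos c
    omega
  have h3 : (d + 2) / p = k + 1 := by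
    rw [← hd]; exact Nat.mul_div_cancel_left _ (by omega)
  have h4 : d + 2 - p = p * k := by omega
  rw [hd, show d + 2 - 1 = d + 1 from rfl, e.eq_def]
  simp only [h1, h2, h3, h4]
  cases m <;> simp

theorem e_other (p d m : ℕ) (h1 : ¬ p ∣ d + 1) (h2 : ¬ p ∣ d + 2) : e p (d + 1) m = 0 := by
  rw [Nat.dvd_iff_mod_eq_zero] at h1 h2
  rw [e.eq_def]; simp [h1, h2]

theorem e_support (p : ℕ) (hp : 3 ≤ p) (d : ℕ) :
    ∀ m, e p d m ≠ 0 → digSum p (d + 1) ≤ m + 1 := by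
  have hp2 : 2 ≤ p := by omega
  induction d using Nat.strong_induction_on with
  | _ d ih =>
    intro m hm
    rcases d with _ | d
    · have := digSum_succ hp2 0
      rw [digSum_zero] at this
      omega
    by_cases h1 : p ∣ d + 1
    · obtain ⟨c, hc⟩ := h1
      rcases c with _ | k
      · simp at hc
      rcases m with _ | m
      · rw [hc, e_mul_zero p hp] at hm; exact absurd rfl hm
      · rw [hc, e_mul p hp, ← hc] at hm
        have := ih d (by omega) m hm
        have := digSum_succ hp2 (d + 1)
        omega
    by_cases h2 : p ∣ d + 2
    · obtain ⟨c, hc⟩ := h2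
      rcases c with _ | k
      · simp at hc
      have h0 : p * (k + 1) = p * k + p := by ring
      have hk : k ≤ p * k := Nat.le_mul_of_pos_left _ (by omega)
      have hd : d + 1 = p * (k + 1) - 1 := by omega
      have hs := digSum_add hp2 (k + 1) 0 (by omega)
      have hs1 := digSum_add hp2 k 1 (by omega)
      have hs2 := digSum_succ hp2 k
      rw [hd, e_pred p hp] at hm
      rw [show d + 1 + 1 = p * (k + 1) + 0 by omega, hs]
      by_cases hz : e p k m = 0
      · rcases m with _ | m
        · simp [hz] at hm
        · simp only [hz, Nat.add_zero] at hm
          have := ih (p * k) (by omega) m hm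
          omega
      · have := ih k (by omega) m hz
        omega
    · exact absurd (e_other p d m h1 h2) hm

theorem e_step (p : ℕ) (hp : p.Prime) (hp3 : 3 ≤ p) (n C : ℕ)
    (hC : ∀ m < n, ∀ d, e p d m ≤ C) (d : ℕ) :
    e p d n ≤ (C + 1) * (1 + min (padicValNat p (d + 1)) (n + 1)) := by
  have hp2 : 2 ≤ p := by omega
  haveI : Fact p.Prime := ⟨hp⟩
  induction d using Nat.strong_induction_on with
  | _ d ih =>
    have hbase : (C + 1) * 1 ≤ (C + 1) * (1 + min (padicValNat p (d + 1)) (n + 1)) :=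
      Nat.mul_le_mul_left _ (by omega)
    rcases d with _ | d
    · have := e_zero_le p n
      omega
    by_cases h1 : p ∣ d + 1
    · obtain ⟨c, hc⟩ := h1
      rcases c with _ | k
      · simp at hc
      rcases n with _ | n
      · rw [hc, e_mul_zero p hp3]; omega
      · have h := hC n (by omega) (p * (k + 1) - 1)
        rw [← e_mul p hp3, ← hc] at h
        omega
    by_cases h2 : p ∣ d + 2
    · obtain ⟨c, hc⟩ := h2
      rcases c with _ | k
      · simp at hc
      have h0 : p * (k + 1) = p * k + p := by ring
      have hk : k ≤ p * k := Nat.le_mul_of_pos_left _ (by omega)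
      have hd : d + 1 = p * (k + 1) - 1 := by omega
      have hv : padicValNat p (d + 1 + 1) = padicValNat p (k + 1) + 1 := by
        rw [show d + 1 + 1 = p * (k + 1) by omega,
          padicValNat.mul (by omega) (by omega), padicValNat_self]
        omega
      have ihk := ih k (by omega)
      rw [hv, hd, e_pred p hp3]
      have hmono : (C + 1) * (1 + min (padicValNat p (k + 1)) (n + 1)) ≤
          (C + 1) * (1 + min (padicValNat p (k + 1) + 1) (n + 1)) :=
        Nat.mul_le_mul_left _ (by omega)
      rcases n with _ | n
      · simp only [Nat.zero_add] at *
        omega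
      · by_cases hz : e p (p * k) n = 0
        · simp only [hz, Nat.zero_add]
          omega
        · have hs := e_support p hp3 _ _ hz
          rw [digSum_add hp2 k 1 (by omega)] at hs
          have hl := le_digSum_pred hp2 (padicValNat p (k + 1)) k pow_padicValNat_dvd
          have hb := hC n (by omega) (p * k)
          have hm : 1 + min (padicValNat p (k + 1) + 1) (n + 1 + 1) =
              (1 + min (padicValNat p (k + 1)) (n + 1 + 1)) + 1 := by omega
          rw [hm, Nat.mul_add_one]
          simp only
          omega
    · rw [e_other p d n h1 h2]; omega

/-- For an odd prime `p` and fixed cohomological degree `n`, the dimensions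
`dim Ext^n(k, Δ(2d)) = e p d n` are bounded independently of `d`. -/
theorem e_bounded_in_d (p : ℕ) (hp : p.Prime) (hodd : Odd p) (n : ℕ) :
    ∃ B : ℕ, ∀ d : ℕ, e p d n ≤ B := by
  have hp3 : 3 ≤ p := by
    have := hp.two_le
    obtain ⟨j, hj⟩ := hodd
    omega
  have key : ∀ n, ∃ C, ∀ m < n, ∀ d, e p d m ≤ C := by
    intro n
    induction n with
    | zero => exact ⟨0, fun m hm => absurd hm (by omega)⟩
    | succ n ih =>
      obtain ⟨C, hC⟩ := ih
      refine ⟨C + (C + 1) * (1 + (n + 1)), fun m hm d => ?_⟩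
      rcases Nat.lt_succ_iff_lt_or_eq.mp hm with h | h
      · exact (hC m h d).trans (Nat.le_add_right _ _)
      · subst h
        refine (e_step p hp hp3 m C hC d).trans ?_
        refine le_trans (Nat.mul_le_mul_left _ ?_) (Nat.le_add_left _ _)
        omega
  obtain ⟨C, hC⟩ := key (n + 1)
  exact ⟨C, hC n (by omega)⟩
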